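/- Let (X,𝒰) be a uniform space such that for every symmetric entourage U ∈ 𝒰 there exist a Bourbaki bounded set B ⊆ X and n ∈ ℕ with X \ Uⁿ[B] uniformly isolated. Suppose further that there is a sequence (Uₙ)ₙ of symmetric entourages such that: (1) every infinite uniformly isolated set in X contains an infinite set which is uniformly Uₙ-isolated for some n; and (2) for every Bourbaki bounded set B ⊆ X and every entourage U there are n, m ∈ ℕ such that the set I = Uₙ[B] \ Uᵐ[B] is uniformly isolated and Uₙ[I] ⊆ I. Then there exists a Bourbaki bounded set F ⊆ X such that for each entourage U ∈ 𝒰 there is n ∈ ℕ with X \ Uⁿ[F] uniformly isolated. -/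

import Mathlib

/-- A relation is symmetric: `(x,y) ∈ U ↔ (y,x) ∈ U`. -/
def SymmRel {X : Type*} (U : Set (X × X)) : Prop :=
  ∀ x y : X, (x, y) ∈ U ↔ (y, x) ∈ U

/-- The image `U[A] = ⋃ x ∈ A, U[x]` of a set under a relation. -/
def relImage {X : Type*} (U : Set (X × X)) (A : Set X) : Set X :=
  ⋃ x ∈ A, UniformSpace.ball x U

/-- `relIter U n` is the `(n+1)`-fold composition `Uⁿ⁺¹ = U ∘ ⋯ ∘ U`;
so as `n` ranges over `ℕ`, all positive powers `Uⁿ` occur. -/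
def relIter {X : Type*} (U : Set (X × X)) : ℕ → Set (X × X)
  | 0 => U
  | n + 1 => SetRel.comp U (relIter U n)

/-- `A` is uniformly isolated: there is an entourage `V` with `V[x] = {x}` for all `x ∈ A`. -/
def UnifIsolated {X : Type*} [UniformSpace X] (A : Set X) : Prop :=
  ∃ V ∈ uniformity X, ∀ x ∈ A, UniformSpace.ball x V = {x}

/-- `A` is Bourbaki bounded in `X`: every uniformly continuous real-valued
function on `X` is bounded on `A`. -/
def BourbakiBounded {X : Type*} [UniformSpace X] (A : Set X) : Prop :=
  ∀ f : X → ℝ, UniformContinuous f → ∃ M : ℝ, ∀ x ∈ A, |f x| ≤ M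

def chainA {Y : Type*} [PseudoMetricSpace Y] (ε : ℝ) (F : Set Y) : ℕ → Set Y
  | 0 => F
  | n + 1 => {y | ∃ x ∈ chainA ε F n, dist x y < ε}

lemma chainA_mono {Y : Type*} [PseudoMetricSpace Y] {ε : ℝ} (hε : 0 < ε) (F : Set Y) :
    Monotone (chainA ε F) :=
  monotone_nat_of_le_succ fun n x hx => ⟨x, hx, by simpa using hε⟩

open Classical in
noncomputable def chainF {Y : Type*} [PseudoMetricSpace Y] (ε : ℝ) (F : Set Y) (x : Y) : ℝ :=
  if h : ∃ n, x ∈ chainA ε F n then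
    match Nat.find h with
    | 0 => 0
    | n + 1 => n + Metric.infDist x (chainA ε F n) / ε
  else 0

lemma chainF_zero {Y : Type*} [PseudoMetricSpace Y] {ε : ℝ} {F : Set Y} {x : Y}
    (h : x ∈ F) : chainF ε F x = 0 := by
  classical
  have h' : ∃ n, x ∈ chainA ε F n := ⟨0, h⟩
  have : Nat.find h' = 0 := by rw [Nat.find_eq_zero]; exact h
  rw [chainF, dif_pos h', this]

lemma chainF_succ {Y : Type*} [PseudoMetricSpace Y] {ε : ℝ} (hε : 0 < ε) {F : Set Y} {x : Y}
    {n : ℕ} (h : x ∈ chainA ε F (n + 1)) (hn : x ∉ chainA ε F n) :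
    chainF ε F x = n + Metric.infDist x (chainA ε F n) / ε := by
  classical
  have h' : ∃ n, x ∈ chainA ε F n := ⟨_, h⟩
  have : Nat.find h' = n + 1 := by
    rw [Nat.find_eq_iff]
    exact ⟨h, fun k hk hx => hn (chainA_mono hε F (by omega) hx)⟩
  rw [chainF, dif_pos h', this]

lemma chain_cases {Y : Type*} [PseudoMetricSpace Y] {ε : ℝ} {F : Set Y} {x : Y}
    {n : ℕ} (h : x ∈ chainA ε F n) : x ∈ F ∨ ∃ k < n, x ∈ chainA ε F (k + 1) ∧ x ∉ chainA ε F k := by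
  induction n with
  | zero => exact Or.inl h
  | succ n ih =>
    by_cases hx : x ∈ chainA ε F n
    · rcases ih hx with h | ⟨k, hk, h⟩
      · exact Or.inl h
      · exact Or.inr ⟨k, by omega, h⟩
    · exact Or.inr ⟨n, by omega, h, hx⟩

lemma chainF_close {Y : Type*} [PseudoMetricSpace Y] {ε : ℝ} (hε : 0 < ε) {F : Set Y} {x y : Y}
    (hxy : dist x y < ε) : |chainF ε F x - chainF ε F y| ≤ 2 * (dist x y / ε) := by
  have hd : 0 ≤ dist x y / ε := by positivity
  by_cases hx : ∃ n, x ∈ chainA ε F n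
  swap
  · have hy : ¬ ∃ n, y ∈ chainA ε F n := by
      rintro ⟨n, hn⟩
      exact hx ⟨n + 1, y, hn, by rwa [dist_comm]⟩
    rw [chainF, chainF, dif_neg hx, dif_neg hy]; simpa using hd
  have hy : ∃ n, y ∈ chainA ε F n := by
    obtain ⟨n, hn⟩ := hx; exact ⟨n + 1, x, hn, hxy⟩
  -- the asymmetric case
  have key0 : ∀ x y : Y, dist x y < ε → y ∈ F → (∃ n, x ∈ chainA ε F n) →
      |chainF ε F x - chainF ε F y| ≤ 2 * (dist x y / ε) := by
    intro x y hxy hy hx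
    have hd : 0 ≤ dist x y / ε := by positivity
    by_cases hxF : x ∈ F
    · rw [chainF_zero hxF, chainF_zero hy]; simpa using hd
    · rw [chainF_zero hy, chainF_succ (n := 0) hε ⟨y, hy, by rwa [dist_comm]⟩ hxF]
      have h1 : Metric.infDist x (chainA ε F 0) / ε ≤ dist x y / ε := by
        gcongr; exact Metric.infDist_le_dist_of_mem hy
      have h2 : 0 ≤ Metric.infDist x (chainA ε F 0) / ε :=
        div_nonneg Metric.infDist_nonneg hε.le
      rw [abs_of_nonneg (by simpa using h2)]
      push_cast; linarith
  have key : ∀ x y : Y, dist x y < ε → ∀ k j : ℕ, k ≤ j →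
      x ∈ chainA ε F (j + 1) → x ∉ chainA ε F j → y ∈ chainA ε F (k + 1) → y ∉ chainA ε F k →
      |chainF ε F x - chainF ε F y| ≤ 2 * (dist x y / ε) := by
    intro x y hxy k j hkj hx1 hx2 hy1 hy2
    have hd : 0 ≤ dist x y / ε := by positivity
    have hj : j ≤ k + 1 := by
      by_contra hlt
      exact hx2 (chainA_mono hε F (by omega : k + 2 ≤ j) ⟨y, hy1, by rwa [dist_comm]⟩)
    rw [chainF_succ hε hx1 hx2, chainF_succ hε hy1 hy2]
    have hne : (chainA ε F k).Nonempty := by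
      obtain ⟨z, hz, _⟩ := hy1; exact ⟨z, hz⟩
    have e1 : Metric.infDist x (chainA ε F k) / ε ≤ Metric.infDist y (chainA ε F k) / ε + dist x y / ε := by
      rw [← add_div]; gcongr; exact Metric.infDist_le_infDist_add_dist
    have e2 : Metric.infDist y (chainA ε F k) / ε ≤ Metric.infDist x (chainA ε F k) / ε + dist x y / ε := by
      rw [← add_div, dist_comm x y]; gcongr; exact Metric.infDist_le_infDist_add_dist
    rcases (by omega : j = k ∨ j = k + 1) with rfl | rfl
    · rw [abs_le]; constructor <;> linarith
    · have e3 : Metric.infDist x (chainA ε F (k+1)) / ε ≤ dist x y / ε := by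
        gcongr; exact Metric.infDist_le_dist_of_mem hy1
      have e4 : 0 ≤ Metric.infDist x (chainA ε F (k+1)) / ε :=
        div_nonneg Metric.infDist_nonneg hε.le
      have e5 : 1 ≤ Metric.infDist x (chainA ε F k) / ε := by
        rw [le_div_iff₀ hε, one_mul]
        by_contra hlt
        push Not at hlt
        obtain ⟨z, hz, hz'⟩ := (Metric.infDist_lt_iff hne).1 hlt
        exact hx2 ⟨z, hz, by rwa [dist_comm]⟩
      have e6 : Metric.infDist y (chainA ε F k) / ε ≤ 1 := by
        rw [div_le_one hε]
        obtain ⟨z, hz, hz'⟩ := hy1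
        rw [dist_comm] at hz'
        exact (Metric.infDist_le_dist_of_mem hz).trans hz'.le
      push_cast
      rw [abs_le]; constructor <;> linarith
  obtain ⟨n, hn⟩ := hx
  obtain ⟨m, hm⟩ := hy
  have hyx : dist y x < ε := by rwa [dist_comm]
  rcases chain_cases hm with hyF | ⟨k, -, hk1, hk2⟩
  · exact key0 x y hxy hyF ⟨n, hn⟩
  rcases chain_cases hn with hxF | ⟨j, -, hj1, hj2⟩
  · have := key0 y x hyx hxF ⟨m, hm⟩
    rwa [abs_sub_comm, dist_comm] at this
  rcases le_total k j with h | h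
  · exact key x y hxy k j h hj1 hj2 hk1 hk2
  · have := key y x hyx j k h hk1 hk2 hj1 hj2
    rwa [abs_sub_comm, dist_comm] at this

lemma chainF_uc {Y : Type*} [PseudoMetricSpace Y] {ε : ℝ} (hε : 0 < ε) (F : Set Y) :
    UniformContinuous (chainF ε F) := by
  rw [Metric.uniformContinuous_iff]
  intro δ hδ
  refine ⟨min ε (ε * δ / 2), by positivity, fun {x y} hxy => ?_⟩
  have h1 := lt_of_lt_of_le hxy (min_le_left _ _)
  have h2 := lt_of_lt_of_le hxy (min_le_right _ _)
  rw [Real.dist_eq]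
  refine (chainF_close hε h1).trans_lt ?_
  have : dist x y / ε < δ / 2 := by
    rw [div_lt_iff₀ hε]; linarith
  linarith

lemma chainF_bound {Y : Type*} [PseudoMetricSpace Y] {ε : ℝ} (hε : 0 < ε) {F : Set Y} {x : Y}
    {n m : ℕ} (h : x ∈ chainA ε F n) (hm : chainF ε F x ≤ m) : x ∈ chainA ε F (m + 1) := by
  rcases chain_cases h with hF | ⟨k, -, h1, h2⟩
  · exact chainA_mono hε F (Nat.zero_le _) hF
  · rw [chainF_succ hε h1 h2] at hm
    have e4 : 0 ≤ Metric.infDist x (chainA ε F k) / ε :=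
        div_nonneg Metric.infDist_nonneg hε.le
    have : (k : ℝ) ≤ m := by linarith
    have : k ≤ m := by exact_mod_cast this
    exact chainA_mono hε F (by omega) h1

lemma exists_pm {X : Type*} [UniformSpace X] {V : Set (X × X)} (hV : V ∈ uniformity X) :
    ∃ I : PseudoMetricSpace X,
      uniformity X ≤ @uniformity X I.toUniformSpace ∧ V ∈ @uniformity X I.toUniformSpace := by
  have step : ∀ A : {A : Set (X × X) // A ∈ uniformity X ∧ ∀ x y, (x, y) ∈ A → (y, x) ∈ A},
      ∃ B : {A : Set (X × X) // A ∈ uniformity X ∧ ∀ x y, (x, y) ∈ A → (y, x) ∈ A},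
        ∀ x y z, (x, y) ∈ B.1 → (y, z) ∈ B.1 → (x, z) ∈ A.1 := by
    rintro ⟨A, hA, -⟩
    obtain ⟨t, ht, hs, hc⟩ := comp_symm_mem_uniformity_sets hA
    exact ⟨⟨t, ht, fun x y h => hs.symm _ _ h⟩, fun x y z h1 h2 => hc ⟨y, h1, h2⟩⟩
  choose g hg using step
  obtain ⟨t, ht, hs, hc⟩ := comp_symm_mem_uniformity_sets hV
  let W : ℕ → {A : Set (X × X) // A ∈ uniformity X ∧ ∀ x y, (x, y) ∈ A → (y, x) ∈ A} :=
    fun n => g^[n] ⟨t, ht, fun x y h => hs.symm _ _ h⟩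
  have hW : ∀ n x y z, (x, y) ∈ (W (n+1)).1 → (y, z) ∈ (W (n+1)).1 → (x, z) ∈ (W n).1 := by
    intro n
    simp only [W, Function.iterate_succ_apply']
    exact hg _
  have hrefl : ∀ n x, (x, x) ∈ (W n).1 := fun n x => refl_mem_uniformity (W n).2.1
  have hanti : Antitone fun n => (W n).1 := antitone_nat_of_succ_le fun n p hp =>
    hW n p.1 p.2 p.2 hp (hrefl _ _)
  have hB : (⨅ n, Filter.principal (W n).1).HasBasis (fun _ => True) (fun n => (W n).1) :=
    Filter.hasBasis_iInf_principal hanti.directed_ge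
  have htr : ∀ y, (y, y) ∈ t := fun y => refl_mem_uniformity ht
  let c : UniformSpace.Core X :=
    { uniformity := ⨅ n, Filter.principal (W n).1
      refl := by
        refine le_iInf fun n => Filter.principal_mono.2 ?_
        rintro ⟨x, y⟩ h
        obtain rfl : x = y := h
        exact hrefl n x
      symm := by
        refine (hB.tendsto_iff hB).2 fun n _ => ⟨n, trivial, fun p hp => (W n).2.2 _ _ hp⟩
      comp := by
        refine hB.ge_iff.2 fun n _ => ?_
        refine Filter.mem_of_superset (Filter.mem_lift' (hB.mem_of_mem (i := n + 1) trivial)) ?_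
        rintro ⟨x, z⟩ ⟨y, h1, h2⟩
        exact hW n x y z h1 h2 }
  let u : UniformSpace X := UniformSpace.ofCore c
  have hu : @uniformity X u = ⨅ n, Filter.principal (W n).1 := rfl
  have : Filter.IsCountablyGenerated (@uniformity X u) := by
    rw [hu]; infer_instance
  obtain ⟨I, hI⟩ := @UniformSpace.metrizable_uniformity X u this
  refine ⟨I, ?_, ?_⟩
  · rw [hI, hu]
    exact le_iInf fun n => Filter.le_principal_iff.2 (W n).2.1
  · rw [hI, hu]
    refine Filter.mem_of_superset (hB.mem_of_mem (i := 0) trivial) ?_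
    rintro ⟨x, y⟩ h
    exact hc ⟨y, h, htr y⟩

lemma relIter_refl {X : Type*} {V : Set (X × X)} (hV : ∀ x, (x, x) ∈ V) (n : ℕ) (x : X) :
    (x, x) ∈ relIter V n := by
  induction n with
  | zero => exact hV x
  | succ n ih => exact ⟨x, hV x, ih⟩

lemma relIter_snoc {X : Type*} {V : Set (X × X)} (n : ℕ) : ∀ {x y z : X},
    (x, y) ∈ relIter V n → (y, z) ∈ V → (x, z) ∈ relIter V (n + 1) := by
  induction n with
  | zero => exact fun h1 h2 => ⟨_, h1, h2⟩
  | succ n ih =>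
    rintro x y z ⟨w, hw, h1⟩ h2
    exact ⟨w, hw, ih h1 h2⟩

lemma mem_relImage {X : Type*} {V : Set (X × X)} {A : Set X} {y : X} :
    y ∈ relImage V A ↔ ∃ x ∈ A, (x, y) ∈ V := by
  simp [relImage, UniformSpace.ball]

abbrev conn {X : Type*} (V : Set (X × X)) : X → X → Prop :=
  Relation.EqvGen fun x y => (x, y) ∈ V

lemma relIter_conn {X : Type*} {V : Set (X × X)} (n : ℕ) : ∀ {x y : X},
    (x, y) ∈ relIter V n → conn V x y := by
  induction n with
  | zero => exact fun h => .rel _ _ h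
  | succ n ih =>
    rintro x y ⟨w, hw, h1⟩
    exact .trans _ _ _ (.rel _ _ hw) (ih h1)

lemma conn_mono {X : Type*} {V W : Set (X × X)} (h : ∀ x y, (x, y) ∈ V → conn W x y) {x y : X}
    (hxy : conn V x y) : conn W x y := by
  induction hxy with
  | rel x y hr => exact h _ _ hr
  | refl x => exact .refl _
  | symm x y _ ih => exact .symm _ _ ih
  | trans x y z _ _ h1 h2 => exact .trans _ _ _ h1 h2

lemma relIter_bound {X : Type*} {f : X → ℝ} (n : ℕ) : ∀ {x y : X},
    (x, y) ∈ relIter {p : X × X | |f p.1 - f p.2| < 1} n → |f y| ≤ |f x| + (n + 1) := by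
  have key : ∀ {x y : X}, |f x - f y| < 1 → |f y| ≤ |f x| + 1 := by
    intro x y h
    have := abs_sub_abs_le_abs_sub (f y) (f x)
    rw [abs_sub_comm] at this
    linarith
  induction n with
  | zero => intro x y h; have := key h; simpa using this
  | succ n ih =>
    rintro x y ⟨w, hw, h1⟩
    have h2 := key hw
    have h3 := ih h1
    push_cast; linarith

/-- A decreasing sequence `W` of sets such that every u.c. function is bounded on some `W n`. -/
def Good {X : Type*} [UniformSpace X] (W : ℕ → Set X) : Prop :=
  Antitone W ∧ ∀ f : X → ℝ, UniformContinuous f → ∃ n, ∃ M : ℝ, ∀ x ∈ W n, |f x| ≤ M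

lemma Good.bdd {X : Type*} [UniformSpace X] {W : ℕ → Set X} (hW : Good W) (E : ℕ → Set X)
    (hE : ∀ n, (E n).Finite) (hEW : ∀ n, E n ⊆ W n) : BourbakiBounded (⋃ n, E n) := by
  intro f hf
  obtain ⟨n, M, hM⟩ := hW.2 f hf
  have hfin : (⋃ i ∈ Set.Iio n, E i).Finite := (Set.finite_Iio n).biUnion fun i _ => hE i
  obtain ⟨M', hM'⟩ := (hfin.image fun x => |f x|).bddAbove
  refine ⟨max M M', fun x hx => ?_⟩
  obtain ⟨i, hi⟩ := Set.mem_iUnion.1 hx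
  rcases lt_or_ge i n with h | h
  · exact le_max_of_le_right (hM' ⟨x, Set.mem_biUnion h hi, rfl⟩)
  · exact le_max_of_le_left (hM x (hW.1 h (hEW i hi)))

lemma Good.reps {X : Type*} [UniformSpace X] {W : ℕ → Set X} (hW : Good W) {V : Set (X × X)}
    (hV : V ∈ uniformity X) : ∃ n, ∀ m ≥ n,
      ∃ E : Set X, E.Finite ∧ E ⊆ W m ∧ ∀ x ∈ W m, ∃ e ∈ E, conn V e x := by
  let s : Setoid X := Relation.EqvGen.setoid fun x y => (x, y) ∈ V
  let q : X → Quotient s := Quotient.mk s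
  have hfin : ∃ n, (q '' W n).Finite := by
    by_contra hcon
    push Not at hcon
    -- points in pairwise different components
    obtain ⟨a, ha⟩ := exists_seq_of_forall_finset_exists
      (fun p : ℕ × X => p.2 ∈ W p.1) (fun p r => p.1 < r.1 ∧ q p.2 ≠ q r.2) (by
        classical
        intro S _
        obtain ⟨z, ⟨x, hx, rfl⟩, hz⟩ :=
          (hcon (S.sup Prod.fst + 1)).exists_notMem_finset (S.image fun p => q p.2)
        refine ⟨(S.sup Prod.fst + 1, x), hx, fun p hp => ⟨?_, fun h => hz ?_⟩⟩
        · exact Nat.lt_succ_of_le (Finset.le_sup (f := Prod.fst) hp)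
        · exact Finset.mem_image.2 ⟨p, hp, h⟩)
    obtain ⟨ha1, ha2⟩ := ha
    have hinj : Function.Injective fun n => q (a n).2 := by
      intro i j hij
      rcases lt_trichotomy i j with h | h | h
      · exact absurd hij (ha2 _ _ h).2
      · exact h
      · exact absurd hij.symm (ha2 _ _ h).2
    have hmono : StrictMono fun n => (a n).1 := fun i j h => (ha2 _ _ h).1
    let g : Quotient s → ℝ := Function.extend (fun n => q (a n).2) (fun n => (n : ℝ)) 0
    have hg : ∀ n, g (q (a n).2) = n := fun n => hinj.extend_apply _ _ n
    have huc : UniformContinuous fun x => g (q x) := by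
      intro T hT
      rw [Filter.mem_map]
      refine Filter.mem_of_superset hV ?_
      rintro ⟨x, y⟩ hxy
      have : q x = q y := Quotient.sound (Relation.EqvGen.rel _ _ hxy)
      change (g (q x), g (q y)) ∈ T
      rw [this]
      exact refl_mem_uniformity hT
    obtain ⟨n, M, hM⟩ := hW.2 _ huc
    obtain ⟨k, hk⟩ := exists_nat_gt M
    have h1 := hM (a (max n k)).2
      (hW.1 ((le_max_left n k).trans (hmono.le_apply)) (ha1 _))
    simp only [hg] at h1
    have h2 : (k : ℝ) ≤ (max n k : ℕ) := by exact_mod_cast le_max_right n k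
    have := le_abs_self ((max n k : ℕ) : ℝ)
    linarith
  obtain ⟨n, hn⟩ := hfin
  refine ⟨n, fun m hm => ?_⟩
  have hm' : (q '' W m).Finite := hn.subset (Set.image_mono (hW.1 hm))
  obtain ⟨E, hEW, hEfin, hEq⟩ := Set.exists_subset_image_finite_and.1
    ⟨q '' W m, subset_rfl, hm', (rfl : q '' W m = q '' W m)⟩
  refine ⟨E, Set.Finite.subset hEfin subset_rfl, hEW, fun x hx => ?_⟩
  have hq : q x ∈ q '' E := by rw [← hEq]; exact ⟨x, hx, rfl⟩
  obtain ⟨e, he, hex⟩ := hq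
  exact ⟨e, he, Quotient.exact hex⟩

lemma main_aux {X : Type*} [UniformSpace X] {W : ℕ → Set X} (hW : Good W)
    (D : ℕ → Set (X × X)) (hD : ∀ n, D n ∈ uniformity X) (hanti : Antitone D)
    (hDW : ∀ n x y, (x, y) ∈ D n → x ∉ W n → x = y)
    (h2 : ∀ B : Set X, BourbakiBounded B → ∀ V ∈ uniformity X,
      ∃ n m : ℕ, relImage (D n) B ⊆ relImage (relIter V m) B) :
    ∃ F : Set X, BourbakiBounded F ∧
      ∀ V ∈ uniformity X, ∃ n q : ℕ, W q ⊆ relImage (relIter V n) F := by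
  have hcomp : ∀ V ∈ uniformity X, ∃ n, ∀ x y, (x, y) ∈ D n → conn V x y := by
    intro V hV
    by_contra hcon
    push Not at hcon
    choose s t hst hnc using hcon
    have hsW : ∀ n, s n ∈ W n := by
      intro n
      by_contra hn
      have := hDW n _ _ (hst n) hn
      apply hnc n
      rw [this]
      exact .refl _
    obtain ⟨n0, hn0⟩ := hW.reps hV
    obtain ⟨E, hE, -, hE2⟩ := hn0 n0 le_rfl
    have hr : ∀ n, ∃ e ∈ E, conn V e (s (n0 + n)) := fun n =>
      hE2 _ (hW.1 (Nat.le_add_right _ _) (hsW _))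
    choose r hrE hr using hr
    have : Finite E := hE
    obtain ⟨e, he⟩ := Finite.exists_infinite_fiber (fun n => (⟨r n, hrE n⟩ : E))
    have he' : {n | r n = e.1}.Infinite := by
      have := Set.infinite_coe_iff.1 he
      refine this.mono fun n hn => ?_
      exact congrArg Subtype.val hn
    let G : ℕ → Set X := fun n => {x | x = s n ∧ conn V e.1 x}
    have hG := hW.bdd G (fun n => (Set.finite_singleton (s n)).subset fun x hx => hx.1)
      (by rintro n x ⟨rfl, -⟩; exact hsW n)
    obtain ⟨j, m, hjm⟩ := h2 _ hG V hV
    obtain ⟨n, hn, hjn⟩ := he'.exists_gt j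
    have hc : conn V e.1 (s (n0 + n)) := by
      have h := hr n
      rw [show r n = e.1 from hn] at h
      exact h
    have hmem : t (n0 + n) ∈ relImage (D j) (⋃ n, G n) :=
      mem_relImage.2 ⟨s (n0 + n), Set.mem_iUnion.2 ⟨n0 + n, rfl, hc⟩,
        hanti (by omega : j ≤ n0 + n) (hst _)⟩
    obtain ⟨x, hx, hxt⟩ := mem_relImage.1 (hjm hmem)
    obtain ⟨i, -, hx⟩ := Set.mem_iUnion.1 hx
    exact hnc (n0 + n) (.trans _ _ _ (.symm _ _ hc) (.trans _ _ _ hx (relIter_conn _ hxt)))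
  have hE : ∀ n, ∃ p ≥ n, ∃ E : Set X, E.Finite ∧ E ⊆ W p ∧ ∀ x ∈ W p, ∃ e ∈ E, conn (D n) e x := by
    intro n
    obtain ⟨p, hp⟩ := hW.reps (hD n)
    exact ⟨max n p, le_max_left _ _, hp _ (le_max_right _ _)⟩
  choose p hp E hEf hEW hEc using hE
  refine ⟨⋃ n, E n, hW.bdd E hEf fun n => (hEW n).trans (hW.1 (hp n)), ?_⟩
  intro V hV
  set F := ⋃ n, E n with hF
  obtain ⟨I, hI1, hI2⟩ := exists_pm hV
  obtain ⟨ε, hε, hεV⟩ := (@Metric.mem_uniformity_dist X I V).1 hI2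
  have hV0 : {p : X × X | I.dist p.1 p.2 < ε} ∈ uniformity X :=
    hI1 (@Metric.dist_mem_uniformity X I ε hε)
  obtain ⟨j, hj⟩ := hcomp _ hV0
  have huc : UniformContinuous (@chainF X I ε F) :=
    (@chainF_uc X I ε hε F).mono_left hI1
  obtain ⟨n, M, hM⟩ := hW.2 _ huc
  obtain ⟨k, hk⟩ := exists_nat_gt M
  have hreach : ∀ x ∈ W (p j), ∃ n, x ∈ @chainA X I ε F n := by
    intro x hx
    obtain ⟨e, he, hex⟩ := hEc j x hx
    replace hex := conn_mono hj hex
    have : (∃ n, e ∈ @chainA X I ε F n) ↔ (∃ n, x ∈ @chainA X I ε F n) := by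
      clear hx he
      induction hex with
      | rel x y hr =>
        exact ⟨fun ⟨n, hn⟩ => ⟨n + 1, x, hn, hr⟩,
          fun ⟨n, hn⟩ => ⟨n + 1, y, hn, by rw [I.dist_comm]; exact hr⟩⟩
      | refl x => rfl
      | symm x y _ ih => exact ih.symm
      | trans x y z _ _ h1 h2 => exact h1.trans h2
    exact this.1 ⟨0, Set.mem_iUnion.2 ⟨j, he⟩⟩
  have hsub : ∀ n, @chainA X I ε F (n + 1) ⊆ relImage (relIter V n) F := by
    intro n
    induction n with
    | zero =>
      rintro y ⟨x, hx, hxy⟩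
      exact mem_relImage.2 ⟨x, hx, hεV hxy⟩
    | succ n ih =>
      rintro y ⟨x, hx, hxy⟩
      obtain ⟨z, hz, hzx⟩ := mem_relImage.1 (ih hx)
      exact mem_relImage.2 ⟨z, hz, relIter_snoc n hzx (hεV hxy)⟩
  refine ⟨k, max n (p j), fun x hx => hsub k ?_⟩
  obtain ⟨i, hi⟩ := hreach x (hW.1 (le_max_right _ _) hx)
  refine @chainF_bound X I ε hε F x i k hi ?_
  have := hM x (hW.1 (le_max_left _ _) hx)
  exact ((le_abs_self _).trans this).trans hk.le

theorem stmt9 {X : Type*} [UniformSpace X]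
    (h : ∀ U ∈ uniformity X, SymmRel U →
      ∃ (B : Set X) (n : ℕ), BourbakiBounded B ∧
        UnifIsolated (Set.univ \ relImage (relIter U n) B))
    (U : ℕ → Set (X × X))
    (hU : ∀ n : ℕ, U n ∈ uniformity X ∧ SymmRel (U n))
    (h1 : ∀ A : Set X, A.Infinite → UnifIsolated A →
      ∃ C ⊆ A, C.Infinite ∧ ∃ n : ℕ, ∀ x ∈ C, UniformSpace.ball x (U n) = {x})
    (h2 : ∀ B : Set X, BourbakiBounded B → ∀ V ∈ uniformity X,
      ∃ n m : ℕ,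
        UnifIsolated (relImage (U n) B \ relImage (relIter V m) B) ∧
        relImage (U n) (relImage (U n) B \ relImage (relIter V m) B) ⊆
          relImage (U n) B \ relImage (relIter V m) B) :
    ∃ F : Set X, BourbakiBounded F ∧
      ∀ V ∈ uniformity X, ∃ n : ℕ,
        UnifIsolated (Set.univ \ relImage (relIter V n) F) := by
  classical
  let D : ℕ → Set (X × X) := fun n => {p | ∀ i ≤ n, p ∈ U i}
  have hDmem : ∀ n, D n ∈ uniformity X := by
    intro n
    have : D n = ⋂ i ∈ Set.Iic n, U i := by ext p; simp [D]
    rw [this]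
    exact (Filter.biInter_mem (Set.finite_Iic n)).2 fun i _ => (hU i).1
  have hDanti : Antitone D := fun a b hab p hp i hi => hp i (hi.trans hab)
  have hDU : ∀ n, D n ⊆ U n := fun n p hp => hp n le_rfl
  let W : ℕ → Set X := fun n => {x | ∃ y, (x, y) ∈ D n ∧ x ≠ y}
  have hWanti : Antitone W := fun a b hab x ⟨y, hy, hne⟩ => ⟨y, hDanti hab hy, hne⟩
  have hDW : ∀ n x y, (x, y) ∈ D n → x ∉ W n → x = y := by
    intro n x y hxy hx
    by_contra hne
    exact hx ⟨y, hxy, hne⟩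
  have hfin : ∀ A : Set X, UnifIsolated A → ∃ n, (A ∩ W n).Finite := by
    intro A hA
    by_contra hcon
    push Not at hcon
    obtain ⟨a, ha1, ha2⟩ := exists_seq_of_forall_finset_exists
      (fun p : ℕ × X => p.2 ∈ A ∩ W p.1) (fun p r => p.1 < r.1 ∧ p.2 ≠ r.2) (by
        intro S _
        obtain ⟨x, hx, hz⟩ :=
          (hcon (S.sup Prod.fst + 1)).exists_notMem_finset (S.image Prod.snd)
        refine ⟨(S.sup Prod.fst + 1, x), hx, fun p hp => ⟨?_, fun h => hz ?_⟩⟩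
        · exact Nat.lt_succ_of_le (Finset.le_sup (f := Prod.fst) hp)
        · exact Finset.mem_image.2 ⟨p, hp, h⟩)
    have hinj : Function.Injective fun n => (a n).2 := by
      intro i j hij
      rcases lt_trichotomy i j with h | h | h
      · exact absurd hij (ha2 _ _ h).2
      · exact h
      · exact absurd hij.symm (ha2 _ _ h).2
    have hmono : StrictMono fun n => (a n).1 := fun i j h => (ha2 _ _ h).1
    obtain ⟨V, hV, hVA⟩ := hA
    obtain ⟨C, hC, hCinf, n, hn⟩ := h1 (Set.range fun n => (a n).2)
      (Set.infinite_range_of_injective hinj)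
      ⟨V, hV, by rintro _ ⟨n, rfl⟩; exact hVA _ (ha1 n).1⟩
    refine hCinf (((Set.finite_Iio n).image fun n => (a n).2).subset ?_)
    intro x hx
    obtain ⟨i, rfl⟩ := hC hx
    refine ⟨i, ?_, rfl⟩
    by_contra hi
    have hi : n ≤ i := not_lt.1 hi
    obtain ⟨y, hy, hne⟩ := hWanti (hi.trans hmono.le_apply) (ha1 i).2
    have : y ∈ UniformSpace.ball (a i).2 (U n) := hDU n hy
    rw [hn _ hx] at this
    exact hne this.symm
  have hGood : Good W := by
    refine ⟨hWanti, fun f hf => ?_⟩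
    have hV1 : {p : X × X | |f p.1 - f p.2| < 1} ∈ uniformity X :=
      hf (Metric.dist_mem_uniformity one_pos)
    obtain ⟨B, k, hB, hiso⟩ := h _ hV1 (fun x y => by
      change |f x - f y| < 1 ↔ |f y - f x| < 1
      rw [abs_sub_comm])
    obtain ⟨n, hn⟩ := hfin _ hiso
    obtain ⟨M, hM⟩ := hB f hf
    obtain ⟨M', hM'⟩ := (hn.image fun x => |f x|).bddAbove
    refine ⟨n, max (M + (k + 1)) M', fun x hx => ?_⟩
    by_cases hxB : x ∈ relImage (relIter {p : X × X | |f p.1 - f p.2| < 1} k) B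
    · obtain ⟨b, hb, hbx⟩ := mem_relImage.1 hxB
      have e1 := relIter_bound k hbx
      have e2 := hM b hb
      exact le_max_of_le_left (by linarith)
    · exact le_max_of_le_right (hM' ⟨x, ⟨⟨trivial, hxB⟩, hx⟩, rfl⟩)
  obtain ⟨F, hF, hFV⟩ := main_aux hGood D hDmem hDanti hDW (by
    intro B hB V hV
    obtain ⟨n, m, -, hc⟩ := h2 B hB V hV
    refine ⟨n, m, fun y hy => ?_⟩
    obtain ⟨x, hx, hxy⟩ := mem_relImage.1 hy
    have hxy := hDU n hxy
    by_contra hyV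
    have hxI := hc (mem_relImage.2
      ⟨y, ⟨mem_relImage.2 ⟨x, hx, hxy⟩, hyV⟩, ((hU n).2 x y).1 hxy⟩)
    exact hxI.2 (mem_relImage.2 ⟨x, hx, relIter_refl (fun z => refl_mem_uniformity hV) m x⟩))
  refine ⟨F, hF, fun V hV => ?_⟩
  obtain ⟨n, q, hq⟩ := hFV V hV
  refine ⟨n, D q, hDmem q, fun x hx => ?_⟩
  ext y
  constructor
  · intro hy
    exact (hDW q x y hy fun hxW => hx.2 (hq hxW)).symm
  · rintro rfl
    exact refl_mem_uniformity (hDmem q)
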